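/- Let k be a positive integer and let p be a prime with p ≡ 5 (mod 6). Let r be a nonnegative integer such that p divides 6r+5. Then for all integers n ≥ 0, B̄_{2,9}( 6p^{k+1} n + 6pr + 5p ) ≡ (−p) · B̄_{2,9}( 6p^{k−1} n + (6r+5)/p ) (mod 8). -/

import Mathlib

/-- `biregOverpartitions l1 l2 n` is the number of `(l1, l2)`-biregular overpartitions of `n`:
overpartitions of `n` (partitions in which the first occurrence of each part size may be
overlined) none of whose parts is divisible by `l1` or by `l2`.  Each partition of `n` with
admissible parts contributes `2 ^ (number of distinct part sizes)` overpartitions,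
corresponding to the choice of which part sizes have their first occurrence overlined. -/
def biregOverpartitions (l1 l2 n : ℕ) : ℕ :=
  ∑ p : Nat.Partition n,
    if ∀ x ∈ p.parts, ¬ l1 ∣ x ∧ ¬ l2 ∣ x then 2 ^ p.parts.toFinset.card else 0

/-!
The generating function of overpartitions with admissible parts is `∏ (1 + 2 x_a)`, over the
admissible `a`, with `x_a = q ^ a + q ^ (2 a) + ⋯`. Modulo `8` the product is determined by the
power sums `S = ∑ x_a` and `Q = ∑ x_a ^ 2` alone: it is `1 + 2 S + 2 (S ^ 2 - Q)`, and the
coefficients of `S`, `S ^ 2` and `Q` are divisor sums. For parts prime to `2` and not divisible by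
`9`, and `n ≡ 1 (mod 6)`, the coefficient of `S ^ 2` at `n` is divisible by `4`: swapping `u` and
`v` in `u + v = n` gives one factor `2`, and each term is itself even because either one of `u`, `v`
is divisible by `3` or both are `2` modulo `3`. What remains is `2 σ(n)`, since `σ(n)` has the
parity of the number of divisors of `n`. So the theorem follows from the Hecke relation
`σ(p² m) + p σ(m) = (p + 1) σ(p m)`, in which `p + 1` and `σ(p m)` are both even.
-/

section General

open Finset

theorem even_card_of_involution {α : Type*} {s : Finset α} (g : α → α)
    (g_mem : ∀ a ∈ s, g a ∈ s) (g_ne : ∀ a ∈ s, g a ≠ a) (g_inv : ∀ a ∈ s, g (g a) = a) :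
    Even #s := by
  have h : ∑ _a ∈ s, (1 : ZMod 2) = 0 :=
    sum_involution (fun a _ ↦ g a) (fun _ _ ↦ by decide) (fun a ha _ ↦ g_ne a ha) g_mem g_inv
  rwa [sum_const, nsmul_one, ZMod.natCast_eq_zero_iff_even] at h

theorem two_dvd_sq_sum_sub_sum_sq {ι R : Type*} [CommRing R] (s : Finset ι) (x : ι → R) :
    2 ∣ (∑ i ∈ s, x i) ^ 2 - ∑ i ∈ s, x i ^ 2 := by
  classical
  induction s using Finset.induction_on with
  | empty => simp
  | insert a s ha ih =>
    obtain ⟨E, hE⟩ := ih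
    refine ⟨E + x a * ∑ i ∈ s, x i, ?_⟩
    rw [sum_insert ha, sum_insert ha]
    linear_combination hE

theorem eight_dvd_prod_one_add_two_mul_sub {ι R : Type*} [CommRing R] (s : Finset ι)
    (x : ι → R) :
    8 ∣ ∏ i ∈ s, (1 + 2 * x i) -
      (1 + 2 * ∑ i ∈ s, x i + 2 * ((∑ i ∈ s, x i) ^ 2 - ∑ i ∈ s, x i ^ 2)) := by
  classical
  induction s using Finset.induction_on with
  | empty => simp
  | insert a s ha ih =>
    obtain ⟨C, hC⟩ := ih
    obtain ⟨E, hE⟩ := two_dvd_sq_sum_sub_sum_sq s x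
    refine ⟨(1 + 2 * x a) * C + x a * E, ?_⟩
    rw [prod_insert ha, sum_insert ha, sum_insert ha]
    linear_combination (1 + 2 * x a) * hC + 4 * x a * hE

theorem sum_antidiagonal_eq_two_nsmul_of_odd {M : Type*} [AddCommMonoid M] {n : ℕ} (hn : Odd n)
    (f : ℕ × ℕ → M) (hf : ∀ x, f x.swap = f x) :
    ∑ x ∈ antidiagonal n, f x = 2 • ∑ x ∈ antidiagonal n with Odd x.1, f x := by
  have even_eq_odd : ∑ x ∈ antidiagonal n with ¬ Odd x.1, f x =
      ∑ x ∈ antidiagonal n with Odd x.1, f x := by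
    refine sum_nbij' Prod.swap Prod.swap ?_ ?_ (by simp) (by simp) fun x _ ↦ (hf x).symm
    all_goals
      rintro ⟨u, v⟩ h
      simp only [mem_filter, HasAntidiagonal.mem_antidiagonal, Prod.swap_prod_mk] at h ⊢
      grind
  rw [← sum_filter_add_sum_filter_not _ (fun x ↦ Odd x.1), even_eq_odd, two_nsmul]

end General

section Overpartitions

open Finset PowerSeries
open scoped PowerSeries.WithPiTopology

/-- The number of overpartitions of `n` all of whose parts satisfy `P`, each partition being
counted once for every set of part sizes whose first occurrence is overlined. -/
def overpartitionCount (P : ℕ → Prop) [DecidablePred P] (n : ℕ) : ℕ :=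
  ∑ p : n.Partition, if ∀ x ∈ p.parts, P x then 2 ^ #p.parts.toFinset else 0

/-- The divisors of `n` that satisfy `P`; as for `Nat.divisors`, there are none for `n = 0`. -/
def restrictedDivisors (P : ℕ → Prop) [DecidablePred P] (n : ℕ) : Finset ℕ :=
  {d ∈ n.divisors | P d}

/-- The generating function `X ^ a + X ^ (2 * a) + ⋯` of the partitions into copies of `a`, at
least one of them; it is `0` if the part `a` is not allowed by `P`, and for `a = 0`. -/
noncomputable def singlePartSeries (R : Type*) [CommRing R] (P : ℕ → Prop) [DecidablePred P]
    (a : ℕ) : R⟦X⟧ :=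
  .mk fun n ↦ if a ∈ restrictedDivisors P n then 1 else 0

theorem X_mul_mk_one_sq (R : Type*) [CommRing R] :
    (X * .mk 1 : R⟦X⟧) ^ 2 = X * .mk fun n ↦ (n : R) := by
  rw [mul_pow, sq X, mul_assoc, mk_one_pow_eq_mk_choose_add R 1]
  congr 1
  ext n
  cases n with
  | zero => simp
  | succ n => simp [coeff_succ_X_mul, add_comm]

theorem hasSum_mk_sum_coeff {R ι : Type*} [Semiring R] [TopologicalSpace R] {x : ι → R⟦X⟧}
    {D : ℕ → Finset ι} (hD : ∀ n, ∀ a ∉ D n, coeff n (x a) = 0) :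
    HasSum x (.mk fun n ↦ ∑ a ∈ D n, coeff n (x a)) := by
  refine (WithPiTopology.hasSum_iff_hasSum_coeff R).2 fun n ↦ ?_
  rw [coeff_mk]
  exact hasSum_sum_of_ne_finset_zero (hD n)

theorem coeff_modEq_of_hasProd_one_add_two_mul {ι : Type*} {x : ι → ℤ⟦X⟧} {F S Q : ℤ⟦X⟧}
    (hF : HasProd (fun i ↦ 1 + 2 * x i) F) (hS : HasSum x S) (hQ : HasSum (fun i ↦ x i ^ 2) Q)
    (n : ℕ) :
    coeff n F ≡ coeff n (1 + 2 * S + 2 * (S ^ 2 - Q)) [ZMOD 8] := by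
  have tendsto_diff := Filter.Tendsto.sub hF <|
    ((hS.const_mul 2).const_add 1).add (((Filter.Tendsto.pow hS 2).sub hQ).const_mul 2)
  have isClosed_dvd : IsClosed {f : ℤ⟦X⟧ | 8 ∣ coeff n f} :=
    (isClosed_discrete {c : ℤ | 8 ∣ c}).preimage (WithPiTopology.continuous_coeff ℤ n)
  have dvd_coeff_diff := isClosed_dvd.mem_of_tendsto tendsto_diff <| .of_forall fun s ↦ by
    obtain ⟨G, hG⟩ := eight_dvd_prod_one_add_two_mul_sub s x
    rw [Set.mem_ofPred_eq, hG, ← map_ofNat C 8, coeff_C_mul]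
    exact dvd_mul_right _ _
  rw [Set.mem_ofPred_eq, map_sub] at dvd_coeff_diff
  exact (Int.modEq_iff_dvd.2 dvd_coeff_diff).symm

variable (P : ℕ → Prop) [DecidablePred P]

section Series

variable (R : Type*) [CommRing R]

variable {P} in
theorem singlePartSeries_eq_expand {a : ℕ} (ha : a ≠ 0) (hPa : P a) :
    singlePartSeries R P a = expand a ha (X * .mk 1) := by
  ext n
  rw [singlePartSeries, coeff_mk, coeff_expand]
  obtain rfl | hn := eq_or_ne n 0
  · simp [restrictedDivisors]
  by_cases h : a ∣ n
  · obtain ⟨c, rfl⟩ := h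
    obtain ⟨c, rfl⟩ := Nat.exists_eq_add_one_of_ne_zero (right_ne_zero_of_mul hn)
    simp [restrictedDivisors, hPa, ha, coeff_succ_X_mul]
  · simp [restrictedDivisors, h]

variable {P} in
theorem singlePartSeries_eq_zero {a : ℕ} (h : a = 0 ∨ ¬ P a) : singlePartSeries R P a = 0 := by
  ext n
  obtain rfl | h := h <;> simp [singlePartSeries, restrictedDivisors, *]

theorem coeff_singlePartSeries_sq (a n : ℕ) :
    coeff n (singlePartSeries R P a ^ 2) =
      if a ∈ restrictedDivisors P n then ((n / a : ℕ) : R) - 1 else 0 := by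
  obtain rfl | ha := eq_or_ne a 0
  · simp [singlePartSeries_eq_zero, restrictedDivisors]
  by_cases hPa : P a
  swap
  · simp [singlePartSeries_eq_zero, restrictedDivisors, hPa]
  rw [singlePartSeries_eq_expand R ha hPa, ← map_pow, X_mul_mk_one_sq, coeff_expand]
  obtain rfl | hn := eq_or_ne n 0
  · simp [restrictedDivisors]
  by_cases h : a ∣ n
  · obtain ⟨c, rfl⟩ := h
    obtain ⟨c, rfl⟩ := Nat.exists_eq_add_one_of_ne_zero (right_ne_zero_of_mul hn)
    simp [restrictedDivisors, hPa, ha, coeff_succ_X_mul]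
  · simp [restrictedDivisors, h]

theorem genFun_eq_mk_overpartitionCount :
    Nat.Partition.genFun (fun i _ ↦ if P i then 2 else 0) =
      (.mk fun n ↦ (overpartitionCount P n : R)) := by
  ext n
  simp [overpartitionCount, Finsupp.prod, prod_ite_zero]

variable [TopologicalSpace R]

theorem hasSum_singlePartSeries :
    HasSum (singlePartSeries R P) (.mk fun n ↦ (#(restrictedDivisors P n) : R)) := by
  simpa [singlePartSeries] using
    hasSum_mk_sum_coeff (x := singlePartSeries R P) (D := restrictedDivisors P)
      fun n a ha ↦ by simp [singlePartSeries, ha]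

theorem hasSum_singlePartSeries_sq :
    HasSum (fun a ↦ singlePartSeries R P a ^ 2)
      (.mk fun n ↦ ∑ a ∈ restrictedDivisors P n, (((n / a : ℕ) : R) - 1)) := by
  convert! hasSum_mk_sum_coeff (D := restrictedDivisors P) fun n a ha ↦ ?_ using 2
  · ext n
    rw [coeff_mk, coeff_mk]
    exact sum_congr rfl fun a ha ↦ by rw [coeff_singlePartSeries_sq, if_pos ha]
  · rw [coeff_singlePartSeries_sq, if_neg ha]

theorem hasSum_ite_smul_X_pow (i : ℕ) :
    HasSum (fun j ↦ (if P (i + 1) then 2 else 0 : R) • (X : R⟦X⟧) ^ ((i + 1) * (j + 1)))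
      (2 * singlePartSeries R P (i + 1)) := by
  refine (WithPiTopology.hasSum_iff_hasSum_coeff R).2 fun n ↦ ?_
  have coeff_two_mul : coeff n (2 * singlePartSeries R P (i + 1)) =
      if i + 1 ∈ restrictedDivisors P n then 2 else 0 := by
    rw [← map_ofNat C 2, coeff_C_mul, singlePartSeries, coeff_mk, mul_ite, mul_one, mul_zero]
  simp only [coeff_two_mul, map_smul, coeff_X_pow, smul_eq_mul, mul_ite, mul_one, mul_zero]
  by_cases h : i + 1 ∈ restrictedDivisors P n
  · obtain ⟨⟨⟨c, rfl⟩, hn⟩, hP⟩ : (i + 1 ∣ n ∧ n ≠ 0) ∧ P (i + 1) := by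
      simpa [restrictedDivisors] using h
    obtain ⟨c, rfl⟩ := Nat.exists_eq_add_one_of_ne_zero (right_ne_zero_of_mul hn)
    simpa [h, hP, eq_comm] using hasSum_ite_eq c (2 : R)
  · convert! hasSum_zero with j
    · rw [ite_eq_right_iff]
      rintro rfl
      have hP : ¬ P (i + 1) := by simpa [restrictedDivisors] using h
      exact if_neg hP
    · rw [if_neg h]

theorem hasProd_one_add_two_mul_singlePartSeries [T2Space R] :
    HasProd (fun a ↦ 1 + 2 * singlePartSeries R P a)
      (.mk fun n ↦ (overpartitionCount P n : R)) := by
  have hasProd_succ : HasProd (fun i ↦ 1 + 2 * singlePartSeries R P (i + 1))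
      (.mk fun n ↦ (overpartitionCount P n : R)) := by
    simpa only [(hasSum_ite_smul_X_pow P R _).tsum_eq,
      genFun_eq_mk_overpartitionCount] using
      Nat.Partition.hasProd_genFun (R := R) fun i _ ↦ if P i then 2 else 0
  refine ((add_left_injective 1).hasProd_iff fun a ha ↦ ?_).1 hasProd_succ
  obtain rfl : a = 0 := by simpa using ha
  rw [singlePartSeries_eq_zero R (.inl rfl), mul_zero, add_zero]

end Series

theorem overpartitionCount_modEq {n : ℕ} (hn : n ≠ 0) :
    (overpartitionCount P n : ℤ) ≡ 2 * #(restrictedDivisors P n) +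
      2 * (∑ x ∈ antidiagonal n, (#(restrictedDivisors P x.1) * #(restrictedDivisors P x.2) : ℤ) -
        ∑ a ∈ restrictedDivisors P n, (((n / a : ℕ) : ℤ) - 1)) [ZMOD 8] := by
  have h := coeff_modEq_of_hasProd_one_add_two_mul
    (hasProd_one_add_two_mul_singlePartSeries P ℤ) (hasSum_singlePartSeries P ℤ)
    (hasSum_singlePartSeries_sq P ℤ) n
  rw [← map_ofNat C 2] at h
  simp only [map_add, map_sub, coeff_C_mul, coeff_one, if_neg hn, zero_add, coeff_mk] at h
  simpa only [sq, coeff_mul, coeff_mk] using h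

end Overpartitions

section DivisorSums

open Finset
open scoped ArithmeticFunction.sigma

theorem even_card_divisors_of_not_isSquare {n : ℕ} (hn : ¬ IsSquare n) : Even #n.divisors := by
  have hn0 : n ≠ 0 := by
    rintro rfl
    exact hn IsSquare.zero
  refine even_card_of_involution (n / ·) (fun d hd ↦ ?_) (fun d hd h ↦ hn ⟨d, ?_⟩) fun d hd ↦ ?_
  · exact Nat.mem_divisors.2 ⟨Nat.div_dvd_of_dvd (Nat.dvd_of_mem_divisors hd), hn0⟩
  · simpa [h] using (Nat.div_mul_cancel (Nat.dvd_of_mem_divisors hd)).symm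
  · exact Nat.div_div_self (Nat.dvd_of_mem_divisors hd) hn0

theorem not_isSquare_of_mod_three_eq_two {n : ℕ} (hn : n % 3 = 2) : ¬ IsSquare n := by
  rintro ⟨c, rfl⟩
  have : c % 3 = 0 ∨ c % 3 = 1 ∨ c % 3 = 2 := by omega
  rcases this with h | h | h <;> simp [Nat.mul_mod, h] at hn

theorem sigma_modEq_card_divisors (k : ℕ) {n : ℕ} (hn : Odd n) :
    σ k n ≡ #n.divisors [MOD 2] := by
  rw [ArithmeticFunction.sigma_apply, card_eq_sum_ones]
  refine Nat.ModEq.sum fun d hd ↦ ?_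
  exact Nat.odd_iff.1 (hn.of_dvd_nat (Nat.dvd_of_mem_divisors hd)).pow

theorem even_sigma_of_odd_of_not_isSquare (k : ℕ) {n : ℕ} (hn : Odd n) (hsq : ¬ IsSquare n) :
    Even (σ k n) :=
  Nat.even_iff.2 <| Eq.trans (sigma_modEq_card_divisors k hn) <|
    Nat.even_iff.1 (even_card_divisors_of_not_isSquare hsq)

theorem sigma_prime_sq_mul {p : ℕ} (hp : p.Prime) (k n : ℕ) :
    σ k (p ^ 2 * n) + p ^ k * σ k n = (p ^ k + 1) * σ k (p * n) := by
  obtain rfl | hn := eq_or_ne n 0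
  · simp
  obtain ⟨a, m, hm, rfl⟩ := Nat.exists_eq_pow_mul_and_not_dvd hn p hp.ne_one
  have sigma_pow_mul (b : ℕ) : σ k (p ^ b * m) = (∑ j ∈ range (b + 1), p ^ (j * k)) * σ k m := by
    rw [ArithmeticFunction.isMultiplicative_sigma.map_mul_of_coprime
      ((hp.coprime_iff_not_dvd.2 hm).pow_left b), ArithmeticFunction.sigma_apply_prime_pow hp]
  rw [← mul_assoc, ← mul_assoc, ← pow_add, ← pow_succ', sigma_pow_mul, sigma_pow_mul,
    sigma_pow_mul, add_comm 2 a, sum_range_succ _ (a + 2), sum_range_succ _ (a + 1)]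
  ring

end DivisorSums

section Biregular

open Finset
open scoped ArithmeticFunction.sigma

/-- The condition on the parts of an `(l₁, l₂)`-biregular overpartition. -/
abbrev IsBiregularPart (l₁ l₂ a : ℕ) : Prop :=
  ¬ l₁ ∣ a ∧ ¬ l₂ ∣ a

theorem biregOverpartitions_eq_overpartitionCount (l₁ l₂ n : ℕ) :
    biregOverpartitions l₁ l₂ n = overpartitionCount (IsBiregularPart l₁ l₂) n :=
  rfl

theorem IsBiregularPart.of_dvd {l₁ l₂ d n : ℕ} (hn : IsBiregularPart l₁ l₂ n) (hd : d ∣ n) :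
    IsBiregularPart l₁ l₂ d :=
  ⟨fun h ↦ hn.1 (h.trans hd), fun h ↦ hn.2 (h.trans hd)⟩

theorem IsBiregularPart.restrictedDivisors_eq_divisors {l₁ l₂ n : ℕ}
    (hn : IsBiregularPart l₁ l₂ n) :
    restrictedDivisors (IsBiregularPart l₁ l₂) n = n.divisors :=
  filter_true_of_mem fun _ hd ↦ hn.of_dvd (Nat.dvd_of_mem_divisors hd)

theorem even_card_restrictedDivisors_of_prime_dvd {l q n : ℕ} (hq : q.Prime)
    (hlq : l.Coprime q) (hqn : q ∣ n) :
    Even #(restrictedDivisors (IsBiregularPart l (q ^ 2)) n) := by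
  refine even_card_of_involution (fun d ↦ if q ∣ d then d / q else q * d)
    (fun d hd ↦ ?_) (fun d hd ↦ ?_) fun d hd ↦ ?_ <;>
    simp only [restrictedDivisors, mem_filter, Nat.mem_divisors] at hd ⊢ <;>
    obtain ⟨⟨hdn, hn⟩, hd⟩ := hd <;>
    by_cases h : q ∣ d
  · rw [if_pos h]
    have hdq : d / q ∣ d := Nat.div_dvd_of_dvd h
    exact ⟨⟨hdq.trans hdn, hn⟩, hd.of_dvd hdq⟩
  · rw [if_neg h]
    refine ⟨⟨(hq.coprime_iff_not_dvd.2 h).mul_dvd_of_dvd_of_dvd hqn hdn, hn⟩,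
      fun hl ↦ hd.1 (hlq.dvd_of_dvd_mul_left hl), fun hqq ↦ h ?_⟩
    rw [sq] at hqq
    exact Nat.dvd_of_mul_dvd_mul_left hq.pos hqq
  · rw [if_pos h]
    exact (Nat.div_lt_self (Nat.pos_of_dvd_of_pos hdn (Nat.pos_of_ne_zero hn)) hq.one_lt).ne
  · rw [if_neg h]
    exact fun h_eq ↦ h (h_eq ▸ dvd_mul_right q d)
  · obtain ⟨c, rfl⟩ := h
    have hqc : ¬ q ∣ c := fun hqc ↦ hd.2 (sq q ▸ mul_dvd_mul_left q hqc)
    rw [if_pos (dvd_mul_right q c), Nat.mul_div_cancel_left c hq.pos, if_neg hqc]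
  · rw [if_neg h, if_pos (dvd_mul_right q d), Nat.mul_div_cancel_left d hq.pos]

theorem even_card_mul_card_restrictedDivisors_two_nine {u v : ℕ} (hu : Odd u)
    (huv : (u + v) % 3 = 1) :
    Even (#(restrictedDivisors (IsBiregularPart 2 9) u) *
      #(restrictedDivisors (IsBiregularPart 2 9) v)) := by
  have even_of_three_dvd {n : ℕ} (hn : 3 ∣ n) :
      Even #(restrictedDivisors (IsBiregularPart 2 9) n) :=
    even_card_restrictedDivisors_of_prime_dvd Nat.prime_three (by decide) hn
  rw [Nat.even_mul]
  by_cases hv : 3 ∣ v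
  · exact .inr (even_of_three_dvd hv)
  by_cases hu3 : 3 ∣ u
  · exact .inl (even_of_three_dvd hu3)
  have : u % 3 = 2 := by omega
  rw [IsBiregularPart.restrictedDivisors_eq_divisors ⟨hu.not_two_dvd_nat, by omega⟩]
  exact .inl (even_card_divisors_of_not_isSquare (not_isSquare_of_mod_three_eq_two this))

theorem four_dvd_sum_antidiagonal_restrictedDivisors_two_nine {n : ℕ} (hn : n % 6 = 1) :
    4 ∣ ∑ x ∈ antidiagonal n, #(restrictedDivisors (IsBiregularPart 2 9) x.1) *
      #(restrictedDivisors (IsBiregularPart 2 9) x.2) := by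
  rw [sum_antidiagonal_eq_two_nsmul_of_odd (by grind) _ fun x ↦ mul_comm _ _, smul_eq_mul]
  refine mul_dvd_mul_left 2 (dvd_sum fun x hx ↦ even_iff_two_dvd.1 ?_)
  obtain ⟨hxn, hx⟩ : x.1 + x.2 = n ∧ Odd x.1 := by simpa using hx
  exact even_card_mul_card_restrictedDivisors_two_nine hx (by omega)

theorem biregOverpartitions_two_nine_modEq {n : ℕ} (hn : n % 6 = 1) :
    (biregOverpartitions 2 9 n : ℤ) ≡ 2 * σ 1 n [ZMOD 8] := by
  have hn_odd : Odd n := by grind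
  have divisors_eq : restrictedDivisors (IsBiregularPart 2 9) n = n.divisors :=
    IsBiregularPart.restrictedDivisors_eq_divisors ⟨hn_odd.not_two_dvd_nat, by omega⟩
  have sum_div : ∑ a ∈ n.divisors, (((n / a : ℕ) : ℤ) - 1) = σ 1 n - #n.divisors := by
    simp [ArithmeticFunction.sigma_eq_sum_div]
  obtain ⟨c, hc⟩ : (4 : ℤ) ∣ ∑ x ∈ antidiagonal n,
      (#(restrictedDivisors (IsBiregularPart 2 9) x.1) *
        #(restrictedDivisors (IsBiregularPart 2 9) x.2) : ℤ) := by
    exact_mod_cast four_dvd_sum_antidiagonal_restrictedDivisors_two_nine hn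
  obtain ⟨e, he⟩ : (2 : ℤ) ∣ #n.divisors - σ 1 n :=
    Nat.modEq_iff_dvd.1 (sigma_modEq_card_divisors 1 hn_odd)
  calc (biregOverpartitions 2 9 n : ℤ)
      ≡ 2 * #n.divisors + 2 * (4 * c - (σ 1 n - #n.divisors)) [ZMOD 8] := by
        rw [biregOverpartitions_eq_overpartitionCount, ← hc, ← sum_div, ← divisors_eq]
        exact overpartitionCount_modEq _ (by omega)
    _ ≡ 2 * σ 1 n [ZMOD 8] := Int.modEq_iff_dvd.2 ⟨-c - e, by linear_combination -4 * he⟩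

theorem biregOverpartitions_two_nine_prime_sq_mul_modEq {p m : ℕ} (hp : p.Prime)
    (hp5 : p % 6 = 5) (hm : m % 6 = 1) :
    (biregOverpartitions 2 9 (p ^ 2 * m) : ℤ) ≡ -p * biregOverpartitions 2 9 m [ZMOD 8] := by
  have hpm : p * m % 6 = 5 := by simp [Nat.mul_mod, hp5, hm]
  have hp2m : p ^ 2 * m % 6 = 1 := by simp [Nat.mul_mod, Nat.pow_mod, hp5, hm]
  have four_dvd : 2 * 2 ∣ (p + 1) * σ 1 (p * m) := by
    refine mul_dvd_mul (by omega) (even_iff_two_dvd.1 ?_)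
    exact even_sigma_of_odd_of_not_isSquare 1 (by grind)
      (not_isSquare_of_mod_three_eq_two (by omega))
  obtain ⟨c, hc⟩ : (4 : ℤ) ∣ σ 1 (p ^ 2 * m) + p * σ 1 m := by
    have hecke := sigma_prime_sq_mul hp 1 m
    rw [pow_one] at hecke
    rw [← hecke] at four_dvd
    exact_mod_cast four_dvd
  calc (biregOverpartitions 2 9 (p ^ 2 * m) : ℤ)
      ≡ 2 * σ 1 (p ^ 2 * m) [ZMOD 8] := biregOverpartitions_two_nine_modEq hp2m
    _ ≡ -p * (2 * σ 1 m) [ZMOD 8] :=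
      Int.modEq_iff_dvd.2 ⟨-c, by linear_combination -2 * hc⟩
    _ ≡ -p * biregOverpartitions 2 9 m [ZMOD 8] :=
      (biregOverpartitions_two_nine_modEq hm).symm.mul_left _

end Biregular

theorem B29_mult_mod8 (k : ℕ) (hk : 0 < k) (p : ℕ) (hp : p.Prime) (hp5 : p % 6 = 5)
    (r : ℕ) (hr : p ∣ 6 * r + 5) (n : ℕ) :
    (biregOverpartitions 2 9 (6 * p ^ (k + 1) * n + 6 * p * r + 5 * p) : ℤ) ≡
      -(p : ℤ) * biregOverpartitions 2 9 (6 * p ^ (k - 1) * n + (6 * r + 5) / p) [ZMOD 8] := by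
  obtain ⟨t, ht⟩ := hr
  obtain ⟨j, rfl⟩ := Nat.exists_eq_add_one_of_ne_zero hk.ne'
  have ht1 : t % 6 = 1 := by
    have : p * t % 6 = 5 := by omega
    rw [Nat.mul_mod, hp5] at this
    omega
  have index_eq : 6 * p ^ (j + 1 + 1) * n + 6 * p * r + 5 * p = p ^ 2 * (6 * p ^ j * n + t) := by
    linear_combination p * ht
  rw [ht, Nat.mul_div_cancel_left _ hp.pos, Nat.add_sub_cancel, index_eq]
  refine biregOverpartitions_two_nine_prime_sq_mul_modEq hp hp5 ?_
  rw [mul_assoc, Nat.mul_add_mod, ht1]
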